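/- Let G be a finite simple graph satisfying: (i) G is claw-free (no induced K_{1,3}); (ii) G contains no clique of size 7; and (iii) for every vertex v of G, the subgraph induced by the closed neighborhood N[v] has at most 4·(deg(v)+1) − 9 edges. Then the maximum degree of G is at most 10. -/

import Mathlib

/-!
Let `v` have degree `d`, and let `T` be the complement of the graph induced on the neighbourhood
of `v`. Claw-freeness makes `T` triangle-free, and a `T`-independent set together with `v` is a
clique, so it has at most 5 vertices; in particular all `T`-degrees are at most 5. Removing the
`d` edges at `v` from the edge bound shows that the `T`-degrees sum to at least
`d(d - 1) - (6d - 10)`. Comparing with `5d` excludes `d ≥ 12`, and for `d = 11` leaves a sum of at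
least 54 out of 55.

In that case there is a `T`-edge `xy` whose ends have degree 5. The neighbourhoods of `x` and `y`
are disjoint and miss a vertex `z`, which has a common neighbour with each of `x` and `y`, as
otherwise it would extend the neighbourhood of `x` or of `y` to an independent 6-set. This gives a
5-cycle. Its degrees sum to at least 23; but every vertex of the triangle-free graph `T` has at
most 2 neighbours on a 5-cycle, so they sum to at most `2 * 11 = 22`.
-/

open Finset SimpleGraph

section TriangleFree

variable {V W : Type*} {G : SimpleGraph V} {k n : ℕ}

lemma card_lt_of_isIndepSet_of_indepSetFree {s : Finset V} (hs : G.IsIndepSet s)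
    (hG : G.IndepSetFree n) : #s < n := by
  by_contra! hns
  exact (G.cliqueFree_compl.2 hG).mono hns s ⟨G.isClique_compl.2 hs, rfl⟩

lemma degree_lt_of_cliqueFree_three_of_indepSetFree (h₃ : G.CliqueFree 3)
    (hn : G.IndepSetFree n) (v : V) [Fintype (G.neighborSet v)] : G.degree v < n := by
  rw [← card_neighborFinset_eq_degree]
  refine card_lt_of_isIndepSet_of_indepSetFree ?_ hn
  rw [coe_neighborFinset]
  exact isIndepSet_neighborSet_of_triangleFree _ h₃ v

lemma nonempty_commonNeighbors_of_indepSetFree (h₃ : G.CliqueFree 3) {x z : V}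
    [Fintype (G.neighborSet x)] (hx : G.IndepSetFree (G.degree x + 1)) (hxz : ¬ G.Adj x z) :
    (G.commonNeighbors x z).Nonempty := by
  classical
  by_contra! hempty
  have hz : z ∉ G.neighborFinset x := by rwa [mem_neighborFinset]
  have hindep : G.IsIndepSet (insert z (G.neighborFinset x) : Finset V) := by
    rw [coe_insert, coe_neighborFinset, ← isClique_compl, isClique_insert, isClique_compl]
    refine ⟨isIndepSet_neighborSet_of_triangleFree _ h₃ x, fun a hxa hza => ⟨hza, fun hadj => ?_⟩⟩
    exact Set.eq_empty_iff_forall_notMem.1 hempty a ⟨hxa, hadj⟩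
  have hcard := card_lt_of_isIndepSet_of_indepSetFree hindep hx
  rw [card_insert_of_notMem hz, card_neighborFinset_eq_degree] at hcard
  exact hcard.false

lemma disjoint_neighborSet_of_adj (h₃ : G.CliqueFree 3) {x y : V} (hxy : G.Adj x y) :
    Disjoint (G.neighborSet x) (G.neighborSet y) := by
  rw [Set.disjoint_left]
  intro w hxw hyw
  exact isIndepSet_neighborSet_of_triangleFree _ h₃ x hxy hxw hyw.ne hyw

lemma nonempty_hom_cycleGraph_five [Fintype V] [DecidableRel G.Adj] (h₃ : G.CliqueFree 3)
    {x y : V} (hxy : G.Adj x y) (hx : G.IndepSetFree (G.degree x + 1))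
    (hy : G.IndepSetFree (G.degree y + 1)) (hcard : G.degree x + G.degree y < Fintype.card V) :
    Nonempty (cycleGraph 5 →g G) := by
  classical
  obtain ⟨z, hz⟩ : ∃ z, z ∉ G.neighborFinset x ∪ G.neighborFinset y := by
    by_contra! hcover
    have hdisj : Disjoint (G.neighborFinset x) (G.neighborFinset y) := by
      rw [← disjoint_coe, coe_neighborFinset, coe_neighborFinset]
      exact disjoint_neighborSet_of_adj h₃ hxy
    rw [← card_univ, ← eq_univ_of_forall hcover, card_union_of_disjoint hdisj,
      card_neighborFinset_eq_degree, card_neighborFinset_eq_degree] at hcard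
    exact hcard.false
  simp only [mem_union, mem_neighborFinset, not_or] at hz
  obtain ⟨a, hxa, hza⟩ := nonempty_commonNeighbors_of_indepSetFree h₃ hx hz.1
  obtain ⟨b, hyb, hzb⟩ := nonempty_commonNeighbors_of_indepSetFree h₃ hy hz.2
  rw [mem_neighborSet] at hxa hza hyb hzb
  refine ⟨⟨![x, a, z, b, y], fun {i j} hij => ?_⟩⟩
  fin_cases i <;> fin_cases j <;> first
    | exact absurd hij (by decide)
    | simp [hxy, hxa, hza, hyb, hzb, hxy.symm, hxa.symm, hza.symm, hyb.symm, hzb.symm]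

lemma indepSetFree_three_cycleGraph_five : (cycleGraph 5).IndepSetFree 3 := by
  unfold IndepSetFree
  decide

/-- Each vertex of the triangle-free graph `G` is adjacent to the images of an independent set of
`C`, so the left-hand side counts each vertex of `G` at most `k` times. -/
lemma sum_degree_hom_le [Fintype V] [DecidableRel G.Adj] [Fintype W] {C : SimpleGraph W}
    (h₃ : G.CliqueFree 3) (hC : C.IndepSetFree (k + 1)) (f : C →g G) :
    ∑ i, G.degree (f i) ≤ k * Fintype.card V := by
  have hfiber (w : V) : #{i | G.Adj (f i) w} ≤ k := by
    refine Nat.le_of_lt_succ (card_lt_of_isIndepSet_of_indepSetFree ?_ hC)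
    intro i hi j hj _ hij
    rw [coe_filter_univ, Set.mem_ofPred_eq] at hi hj
    exact isIndepSet_neighborSet_of_triangleFree _ h₃ w hi.symm hj.symm (f.map_adj hij).ne
      (f.map_adj hij)
  calc ∑ i, G.degree (f i) = ∑ i, #{w | G.Adj (f i) w} := by
        simp only [← card_neighborFinset_eq_degree, neighborFinset_eq_filter]
    _ = ∑ w, #{i | G.Adj (f i) w} :=
        sum_card_bipartiteAbove_eq_sum_card_bipartiteBelow fun i w => G.Adj (f i) w
    _ ≤ ∑ _w : V, k := sum_le_sum fun w _ => hfiber w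
    _ = k * Fintype.card V := by rw [sum_const, card_univ, smul_eq_mul, mul_comm]

/-- Otherwise the degrees along a 5-cycle sum to at least `5 * (2 * k - 1) / 2`, whereas they sum to
at most `2 * Fintype.card V`. -/
lemma exists_ne_degree_add_degree_add_two_le [Fintype V] [DecidableRel G.Adj]
    (h₃ : G.CliqueFree 3) (hk : G.IndepSetFree (k + 1)) (hlower : 2 * k < Fintype.card V)
    (hupper : 4 * Fintype.card V + 5 < 10 * k) :
    ∃ a b, a ≠ b ∧ G.degree a + G.degree b + 2 ≤ 2 * k := by
  by_contra! hpair
  have hle (v : V) : G.degree v ≤ k :=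
    Nat.le_of_lt_succ (degree_lt_of_cliqueFree_three_of_indepSetFree h₃ hk v)
  have hfull {s : Finset V} (hs : 1 < #s) : ∃ a ∈ s, G.degree a = k := by
    obtain ⟨a, ha, b, hb, hab⟩ := one_lt_card.1 hs
    have := hpair a b hab
    rcases (hle a).eq_or_lt with hak | hak
    · exact ⟨a, ha, hak⟩
    · exact ⟨b, hb, by have := hle b; omega⟩
  obtain ⟨x, -, hx⟩ := hfull (s := univ) (by rw [card_univ]; omega)
  obtain ⟨y, hxy, hy⟩ := hfull (s := G.neighborFinset x)
    (by rw [card_neighborFinset_eq_degree]; omega)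
  obtain ⟨c⟩ := nonempty_hom_cycleGraph_five h₃ ((mem_neighborFinset ..).1 hxy) (by rwa [hx])
    (by rwa [hy]) (by omega)
  have hsum := sum_degree_hom_le h₃ indepSetFree_three_cycleGraph_five c
  have hedge (i : Fin 5) : 2 * k < G.degree (c i) + G.degree (c (i + 1)) + 2 :=
    hpair _ _ (c.map_adj (by revert i; decide)).ne
  have hcycle : 10 * k ≤ 2 * ∑ i, G.degree (c i) + 5 := by
    calc 10 * k = ∑ _i : Fin 5, 2 * k := by rw [sum_const, card_univ, Fintype.card_fin]; ring
      _ ≤ ∑ i, (G.degree (c i) + G.degree (c (i + 1)) + 1) :=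
          sum_le_sum fun i _ => Nat.le_of_lt_succ (hedge i)
      _ = 2 * ∑ i, G.degree (c i) + 5 := by
          have hshift : ∑ i, G.degree (c (i + 1)) = ∑ i, G.degree (c i) :=
            Equiv.sum_comp (Equiv.addRight 1) fun i => G.degree (c i)
          simp only [sum_add_distrib, hshift, sum_const, card_univ, Fintype.card_fin]
          ring
  omega

lemma sum_degree_add_two_le [Fintype V] [DecidableRel G.Adj] (h₃ : G.CliqueFree 3)
    (hk : G.IndepSetFree (k + 1)) (hlower : 2 * k < Fintype.card V)
    (hupper : 4 * Fintype.card V + 5 < 10 * k) :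
    ∑ v, G.degree v + 2 ≤ k * Fintype.card V := by
  classical
  obtain ⟨a, b, hab, hdeg⟩ := exists_ne_degree_add_degree_add_two_le h₃ hk hlower hupper
  have hrest : ∑ v ∈ {a, b}ᶜ, G.degree v ≤ #({a, b}ᶜ : Finset V) * k :=
    sum_le_card_nsmul _ _ _ fun v _ =>
      Nat.le_of_lt_succ (degree_lt_of_cliqueFree_three_of_indepSetFree h₃ hk v)
  calc ∑ v, G.degree v + 2
      = (G.degree a + G.degree b + 2) + ∑ v ∈ {a, b}ᶜ, G.degree v := by
        rw [← sum_add_sum_compl {a, b}, sum_pair hab]; ring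
    _ ≤ 2 * k + #({a, b}ᶜ : Finset V) * k := add_le_add hdeg hrest
    _ = k * Fintype.card V := by
        rw [← card_add_card_compl {a, b}, card_pair hab]; ring

lemma sum_degree_compl_add_two_mul_card_edgeFinset (G : SimpleGraph V) [Fintype V]
    [DecidableEq V] [DecidableRel G.Adj] :
    ∑ v, Gᶜ.degree v + 2 * #G.edgeFinset = Fintype.card V * (Fintype.card V - 1) := by
  have hdeg (v : V) : Gᶜ.degree v + G.degree v = Fintype.card V - 1 := by
    have := G.degree_lt_card_verts v
    rw [degree_compl]
    omega
  rw [← sum_degrees_eq_twice_card_edges, ← sum_add_distrib, sum_congr rfl fun v _ => hdeg v,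
    sum_const, card_univ, smul_eq_mul]

lemma card_le_ten_of_indepSetFree_of_cliqueFree [Fintype V] [DecidableRel G.Adj]
    (h₃ : G.IndepSetFree 3) (h₆ : G.CliqueFree 6)
    (hedges : #G.edgeFinset + 5 ≤ 3 * Fintype.card V) : Fintype.card V ≤ 10 := by
  classical
  by_contra! hcard
  rw [← cliqueFree_compl] at h₃
  rw [← indepSetFree_compl] at h₆
  have hsum := sum_degree_compl_add_two_mul_card_edgeFinset G
  have hle : ∑ v, Gᶜ.degree v ≤ Fintype.card V * 5 :=
    sum_le_card_nsmul _ _ _ fun v _ =>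
      Nat.le_of_lt_succ (degree_lt_of_cliqueFree_three_of_indepSetFree h₃ h₆ v)
  have hquadratic : Fintype.card V * (Fintype.card V - 1) + 10 ≤ 11 * Fintype.card V := by omega
  have hcard_eq : Fintype.card V = 11 := by
    by_contra! hne
    have := Nat.mul_le_mul_left (Fintype.card V) (show 11 ≤ Fintype.card V - 1 by omega)
    omega
  have := sum_degree_add_two_le h₃ h₆ (by omega) (by omega)
  rw [hcard_eq] at hsum
  omega

end TriangleFree

section Neighborhood

variable {V : Type*} {G : SimpleGraph V}

lemma ncard_edgeSet_induce (s : Set V) :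
    (G.induce s).edgeSet.ncard = (G.edgeSet ∩ s.sym2).ncard := by
  rw [← Set.ncard_image_of_injective _ (Sym2.map.injective Subtype.val_injective)]
  congr 1
  ext ⟨x, y⟩
  simp only [Set.mem_image, Set.mem_inter_iff, Sym2.exists, Subtype.exists, mem_edgeSet,
    comap_adj, Function.Embedding.subtype_apply, Sym2.map_mk, Sym2.eq_iff, Set.mk_mem_sym2_iff]
  grind [SimpleGraph.adj_comm]

lemma edgeSet_inter_sym2_insert_neighborSet (v : V) :
    G.edgeSet ∩ (insert v (G.neighborSet v)).sym2 =
      G.incidenceSet v ∪ G.edgeSet ∩ (G.neighborSet v).sym2 := by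
  ext ⟨x, y⟩
  simp only [Set.mem_inter_iff, Set.mem_union, mem_edgeSet, Set.mk_mem_sym2_iff,
    Set.mem_insert_iff, mem_neighborSet, mk'_mem_incidenceSet_iff]
  grind [SimpleGraph.adj_comm]

lemma disjoint_incidenceSet_sym2_neighborSet (v : V) :
    Disjoint (G.incidenceSet v) (G.neighborSet v).sym2 := by
  rw [Set.disjoint_left]
  rintro e hev he
  exact G.loopless.irrefl v (Set.mem_sym2_iff_subset.1 he hev.2)

lemma ncard_edgeSet_induce_insert_neighborSet (v : V) [Fintype (G.neighborSet v)] :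
    (G.induce (insert v (G.neighborSet v))).edgeSet.ncard =
      G.degree v + (G.induce (G.neighborSet v)).edgeSet.ncard := by
  classical
  have hdeg : (G.incidenceSet v).ncard = G.degree v := by
    rw [← card_incidenceSet_eq_degree, ← Nat.card_coe_set_eq, Nat.card_eq_fintype_card]
  have hfinite : (G.edgeSet ∩ (G.neighborSet v).sym2).Finite := by
    rw [Set.sym2_eq_mk_image]
    exact (((Set.toFinite _).prod (Set.toFinite _)).image _).inter_of_right _
  rw [ncard_edgeSet_induce, ncard_edgeSet_induce, edgeSet_inter_sym2_insert_neighborSet,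
    Set.ncard_union_eq ((disjoint_incidenceSet_sym2_neighborSet v).mono_right
      Set.inter_subset_right) (Set.toFinite _) hfinite, hdeg]

lemma indepSetFree_three_induce_neighborSet {v : V}
    (hclaw : ∀ x y z : V, x ≠ y → x ≠ z → y ≠ z → G.Adj v x → G.Adj v y → G.Adj v z →
      (G.Adj x y ∨ G.Adj x z ∨ G.Adj y z)) :
    (G.induce (G.neighborSet v)).IndepSetFree 3 := by
  classical
  rw [← cliqueFree_compl]
  intro s hs
  obtain ⟨x, y, z, hxy, hxz, hyz, -⟩ := is3Clique_iff.1 hs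
  simp only [compl_adj, comap_adj, Function.Embedding.subtype_apply, ne_eq, Subtype.ext_iff]
    at hxy hxz hyz
  rcases hclaw x y z hxy.1 hxz.1 hyz.1 x.2 y.2 z.2 with h | h | h
  exacts [hxy.2 h, hxz.2 h, hyz.2 h]

lemma cliqueFree_induce_neighborSet {n : ℕ} (hG : G.CliqueFree (n + 1)) (v : V) :
    (G.induce (G.neighborSet v)).CliqueFree n := by
  rw [cliqueFree_induce_iff, ← Set.univ_inter (G.neighborSet v)]
  exact (G.cliqueFreeOn_univ.2 hG).of_succ G (Set.mem_univ v)

end Neighborhood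

theorem stmt_5_general {V : Type*} (G : SimpleGraph V) (v : V) [Fintype (G.neighborSet v)]
    (hclawFree : ∀ x y z : V, x ≠ y → x ≠ z → y ≠ z →
      G.Adj v x → G.Adj v y → G.Adj v z →
      (G.Adj x y ∨ G.Adj x z ∨ G.Adj y z))
    (hK7free : G.CliqueFree 7)
    (hedges : ((G.induce (insert v (G.neighborSet v))).edgeSet.ncard : ℤ) ≤
        4 * ((G.degree v : ℤ) + 1) - 9) :
    G.degree v ≤ 10 := by
  classical
  have hnbr : #(G.induce (G.neighborSet v)).edgeFinset + 5 ≤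
      3 * Fintype.card (G.neighborSet v) := by
    rw [ncard_edgeSet_induce_insert_neighborSet, ← coe_edgeFinset, Set.ncard_coe_finset] at hedges
    rw [card_neighborSet_eq_degree]
    omega
  rw [← card_neighborSet_eq_degree]
  exact card_le_ten_of_indepSetFree_of_cliqueFree
    (indepSetFree_three_induce_neighborSet hclawFree) (cliqueFree_induce_neighborSet hK7free v) hnbr

/-- If `G` is claw-free, contains no clique of size 7, and for every vertex `v`
the subgraph induced by the closed neighborhood `N[v]` has at most
`4·(deg v + 1) − 9` edges, then the maximum degree of `G` is at most 10. -/
theorem stmt_5 {V : Type*} [Fintype V] (G : SimpleGraph V) [DecidableRel G.Adj]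
    (hclawFree : ∀ u x y z : V, x ≠ y → x ≠ z → y ≠ z →
      G.Adj u x → G.Adj u y → G.Adj u z →
      (G.Adj x y ∨ G.Adj x z ∨ G.Adj y z))
    (hK7free : G.CliqueFree 7)
    (hedges : ∀ v : V,
      ((G.induce (insert v (G.neighborSet v))).edgeSet.ncard : ℤ) ≤
        4 * ((G.degree v : ℤ) + 1) - 9) :
    ∀ v : V, G.degree v ≤ 10 :=
  fun v => stmt_5_general G v (hclawFree v) hK7free (hedges v)
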